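/- Let η : ℝ → (0,∞) be C³ and 1-periodic, let ψ(x,z) = ∂ₓη(x)·χ(z/η(x)) with χ(s) = s²(3 − 2s), and define the vector field φ = ∇⊥ψ = (−∂_zψ, ∂ₓψ) on the closure of Ω_η. Then: (i) φ is divergence-free, i.e. ∂ₓφ₁ + ∂_zφ₂ = 0 on Ω_η; (ii) φ vanishes on the bottom boundary, φ(x,0) = (0,0) for all x; (iii) on the top boundary φ has purely vertical values matching the second derivative of the displacement, φ(x, η(x)) = (0, ∂ₓ²η(x)) for all x; and (iv) φ is 1-periodic in x. -/

import Mathlib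

open MeasureTheory Set

noncomputable section

/-- The cut-off function `χ(s) = s²(3 − 2s)`. -/
def cutoff (s : ℝ) : ℝ := s ^ 2 * (3 - 2 * s)

/-- The stream function `ψ(x,z) = ∂ₓη(x)·χ(z/η(x))`. -/
def stream (η : ℝ → ℝ) (p : ℝ × ℝ) : ℝ := deriv η p.1 * cutoff (p.2 / η p.1)

/-- First component of `φ = ∇⊥ψ = (−∂_zψ, ∂ₓψ)`. -/
def phi1 (η : ℝ → ℝ) (p : ℝ × ℝ) : ℝ := -(fderiv ℝ (stream η) p (0, 1))

/-- Second component of `φ = ∇⊥ψ = (−∂_zψ, ∂ₓψ)`. -/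
def phi2 (η : ℝ → ℝ) (p : ℝ × ℝ) : ℝ := fderiv ℝ (stream η) p (1, 0)

theorem stream_contDiff (η : ℝ → ℝ) (hη : ContDiff ℝ 3 η) (hpos : ∀ x, 0 < η x) :
    ContDiff ℝ 2 (stream η) := by
  have h1 : ContDiff ℝ 2 (deriv η) := by
    have h : ContDiff ℝ (2 + 1) η := by
      have e : (2 + 1 : WithTop ℕ∞) = 3 := by norm_num
      rw [e]; exact hη
    exact (contDiff_succ_iff_deriv.1 h).2.2
  have h2 : ContDiff ℝ 2 η := hη.of_le (by norm_num)
  have h3 : ContDiff ℝ 2 (fun p : ℝ × ℝ => p.2 / η p.1) :=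
    contDiff_snd.div (h2.comp contDiff_fst) (fun p => (hpos p.1).ne')
  unfold stream cutoff
  exact (h1.comp contDiff_fst).mul
    ((h3.pow 2).mul (contDiff_const.sub (contDiff_const.mul h3)))

theorem phi1_eq (η : ℝ → ℝ) (hη : ContDiff ℝ 3 η) (hpos : ∀ x, 0 < η x) (x z : ℝ) :
    phi1 η (x, z) = -(deriv η x * (6 * (z / η x) * (1 - z / η x) / η x)) := by
  have hd := ((stream_contDiff η hη hpos).differentiable (by norm_num) (x, z)).hasFDerivAt
  have hl : HasDerivAt (fun t : ℝ => (x, t)) ((0, 1) : ℝ × ℝ) z :=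
    (hasDerivAt_const z x).prodMk (hasDerivAt_id z)
  have h := hd.comp_hasDerivAt z hl
  have hq : HasDerivAt (fun t : ℝ => t / η x) (1 / η x) z := (hasDerivAt_id z).div_const _
  have h' := ((hq.pow 2).mul ((hq.const_mul 2).const_sub 3)).const_mul (deriv η x)
  have e := h.unique h'
  unfold phi1
  rw [e]
  simp only [Pi.pow_apply, Nat.cast_ofNat]
  ring

theorem phi2_eq (η : ℝ → ℝ) (hη : ContDiff ℝ 3 η) (hpos : ∀ x, 0 < η x) (x z : ℝ) :
    phi2 η (x, z) = deriv (deriv η) x * cutoff (z / η x)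
      - deriv η x * (6 * (z / η x) * (1 - z / η x) * (z * deriv η x / η x ^ 2)) := by
  have hd := ((stream_contDiff η hη hpos).differentiable (by norm_num) (x, z)).hasFDerivAt
  have hl : HasDerivAt (fun t : ℝ => (t, z)) ((1, 0) : ℝ × ℝ) x :=
    (hasDerivAt_id x).prodMk (hasDerivAt_const x z)
  have h := hd.comp_hasDerivAt x hl
  have h1 : HasDerivAt η (deriv η x) x := (hη.differentiable (by norm_num) x).hasDerivAt
  have h2 : HasDerivAt (deriv η) (deriv (deriv η) x) x := by
    have h : ContDiff ℝ (2 + 1) η := by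
      have e : (2 + 1 : WithTop ℕ∞) = 3 := by norm_num
      rw [e]; exact hη
    exact ((contDiff_succ_iff_deriv.1 h).2.2.differentiable (by norm_num) x).hasDerivAt
  have hq : HasDerivAt (fun t : ℝ => z / η t) _ x := (hasDerivAt_const x z).div h1 (hpos x).ne'
  have h' := h2.mul ((hq.pow 2).mul ((hq.const_mul 2).const_sub 3))
  have e := h.unique h'
  unfold phi2 cutoff
  rw [e]
  simp
  ring

/-- admissibility of the test function `φ = ∇⊥ψ` in the proof of the
uniform no-contact result, Proposition 3.2. For a positive, C³, 1-periodic `η`: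
(i) `φ` is divergence-free on `Ω_η`; (ii) `φ(x,0) = (0,0)`;
(iii) `φ(x,η(x)) = (0, ∂ₓ²η(x))`; (iv) `φ` is 1-periodic in `x`. -/
theorem stmt_11 (η : ℝ → ℝ) (hη : ContDiff ℝ 3 η) (hper : ∀ x, η (x + 1) = η x)
    (hpos : ∀ x, 0 < η x) :
    (∀ p : ℝ × ℝ, p.1 ∈ Ioo (0:ℝ) 1 → p.2 ∈ Ioo 0 (η p.1) →
        fderiv ℝ (phi1 η) p (1, 0) + fderiv ℝ (phi2 η) p (0, 1) = 0)
    ∧ (∀ x : ℝ, phi1 η (x, 0) = 0 ∧ phi2 η (x, 0) = 0)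
    ∧ (∀ x : ℝ, phi1 η (x, η x) = 0 ∧ phi2 η (x, η x) = deriv (deriv η) x)
    ∧ (∀ x z : ℝ, phi1 η (x + 1, z) = phi1 η (x, z) ∧ phi2 η (x + 1, z) = phi2 η (x, z)) := by
  have hC := stream_contDiff η hη hpos
  have hder : ∀ x, deriv η (x + 1) = deriv η x := by
    intro x
    rw [← deriv_comp_add_const]
    congr 1
    exact funext hper
  have hder2 : ∀ x, deriv (deriv η) (x + 1) = deriv (deriv η) x := by
    intro x
    rw [← deriv_comp_add_const]
    congr 1
    exact funext hder
  refine ⟨?_, ?_, ?_, ?_⟩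
  · intro p _ _
    have hs : IsSymmSndFDerivAt ℝ (stream η) p :=
      hC.contDiffAt.isSymmSndFDerivAt (by simp)
    have hdd : DifferentiableAt ℝ (fderiv ℝ (stream η)) p :=
      (hC.fderiv_right (m := 1) (by norm_num)).differentiable (by norm_num) p
    have key : ∀ v : ℝ × ℝ, HasFDerivAt (fun q => fderiv ℝ (stream η) q v)
        ((ContinuousLinearMap.apply ℝ ℝ v).comp (fderiv ℝ (fderiv ℝ (stream η)) p)) p := by
      intro v
      exact (ContinuousLinearMap.apply ℝ ℝ v).hasFDerivAt.comp p hdd.hasFDerivAt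
    have e1 : fderiv ℝ (phi1 η) p = _ := (key (0, 1)).neg.fderiv
    have e2 : fderiv ℝ (phi2 η) p = _ := (key (1, 0)).fderiv
    rw [e1, e2]
    have := hs (1, 0) (0, 1)
    simp [this]
  · intro x
    rw [phi1_eq η hη hpos, phi2_eq η hη hpos]
    simp [cutoff]
  · intro x
    rw [phi1_eq η hη hpos, phi2_eq η hη hpos, div_self (hpos x).ne']
    constructor
    · ring
    · unfold cutoff; ring
  · intro x z
    simp only [phi1_eq η hη hpos, phi2_eq η hη hpos, hper, hder, hder2, and_self]

end
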